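/- Let n ≥ 0, k = ⌊n/2⌋, let d_0,…,d_k ≥ 0 with m = Σ_{j=0}^k (j+1)d_j, and suppose Q_n(d_0,…,d_k) is nonempty. Define 𝔥 = (h_0,…,h_n) by h_i = 0 for all odd i (and h_n = 0 if n is odd) and h_{2i} = Σ_{j=i}^k d_j for 0 ≤ i ≤ k. Then 𝔥 ∈ Q_n(d_0,…,d_k), and every 𝔞 ∈ Q_n(d_0,…,d_k) with 𝔞 ≠ 𝔥 satisfies rk(𝔞) > rk(𝔥); that is, 𝔥 is the unique element of Q_n(d_0,…,d_k) of minimal rank (equivalently, of highest weight). -/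

import Mathlib

/- Common definitions following K. O'Hara's spread/degree and the signature
   refinement; elements of A_n(m) are lists of naturals of length n+1 and sum m. -/

namespace OHara

/-- The spread of `a = (a_0, …, a_n)`: the maximum of `a_i + a_{i+1}` over `0 ≤ i ≤ n-1`
(`0` if the list has length ≤ 1). -/
def sprL (a : List ℕ) : ℕ :=
  (Finset.range (a.length - 1)).sup (fun i => a.getD i 0 + a.getD (i + 1) 0)

/-- `M(a)`: the set of left indices of maximal pairs. -/
def Mset (a : List ℕ) : Finset ℕ :=
  (Finset.range (a.length - 1)).filter (fun i => a.getD i 0 + a.getD (i + 1) 0 = sprL a)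

/-- The connected component (maximal interval of consecutive integers) of `i` inside `S`. -/
def compF (S : Finset ℕ) (i : ℕ) : Finset ℕ :=
  S.filter (fun j => Finset.Icc (min i j) (max i j) ⊆ S)

/-- The left endpoints of the maximal intervals of consecutive integers of `S`. -/
def leftEnds (S : Finset ℕ) : Finset ℕ :=
  S.filter (fun i => i = 0 ∨ (i - 1) ∉ S)

/-- O'Hara's degree: the sum over the maximal intervals `D` of `M(a)` of `⌈|D|/2⌉`. -/
def ecdL (a : List ℕ) : ℕ :=
  ∑ i ∈ leftEnds (Mset a), ((compF (Mset a) i).card + 1) / 2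

/-- The set of active indices `Act(a) = M(a) ∪ (1 + M(a))`. -/
def ActF (a : List ℕ) : Finset ℕ :=
  Mset a ∪ (Mset a).image (· + 1)

/-- An index `j` survives in `ω(a)` iff it is not active, or it is the left endpoint `c` of a
maximal interval `D = [c, c+d]` of `M(a)` with `d` odd (i.e. `|D|` even). -/
def survivesB (a : List ℕ) (j : ℕ) : Bool :=
  decide (j ∉ ActF a ∨ (j ∈ leftEnds (Mset a) ∧ Even (compF (Mset a) j).card))

/-- `ω(a)`: the result of removing from `a` the largest possible number of maximal pairs. -/
def omegaL (a : List ℕ) : List ℕ :=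
  ((List.range a.length).filter (fun j => survivesB a j)).map (fun j => a.getD j 0)

/-- Fuel-driven recursion computing the signature (the fuel `a.length` in `sigmaL`
always suffices, since `ω` shortens a list of length ≥ 3 by at least 2). -/
def sigmaAux : ℕ → List ℕ → List ℕ
  | _, [] => []
  | 0, a => [a.sum]
  | fuel + 1, a =>
    if a.length ≤ 2 then [a.sum]
    else List.replicate (ecdL a - 1) 0 ++ [sprL a - sprL (omegaL a)] ++ sigmaAux fuel (omegaL a)

/-- The signature `σ(a)`. -/
def sigmaL (a : List ℕ) : List ℕ := sigmaAux a.length a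

/-- `m = Σ_{j=0}^k (j+1)·d_j` determined by a signature `(d_0, …, d_k)`. -/
def mOf (ds : List ℕ) : ℕ := ∑ j ∈ Finset.range ds.length, (j + 1) * ds.getD j 0

/-- `Q_n(d_0, …, d_k)`: the set of elements of `A_n(m)` of signature `(d_0, …, d_k)`. -/
def Qset (n : ℕ) (ds : List ℕ) : Set (List ℕ) :=
  {a | a.length = n + 1 ∧ a.sum = mOf ds ∧ sigmaL a = ds}

/-- The rank `rk(a) = Σ i·a_i`. -/
def rkL (a : List ℕ) : ℕ := ∑ i ∈ Finset.range a.length, i * a.getD i 0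

/-- `b` covers `a` in `A_n(m)`: `b` is obtained from `a` by replacing some consecutive pair
`(a_i, a_{i+1})` by `(a_i - 1, a_{i+1} + 1)`. -/
def coversL (b a : List ℕ) : Prop :=
  ∃ i, i + 1 < a.length ∧ 0 < a.getD i 0 ∧
    b = (a.set i (a.getD i 0 - 1)).set (i + 1) (a.getD (i + 1) 0 + 1)

/-- Normalization phase of the raising algorithm: starting at index `i ∈ M(a)`, repeatedly
replace `i` by `i - 1` as long as `i ≥ 1` and `a_{i+1} = a_{i-1}`. -/
def rnormIdx (a : List ℕ) : ℕ → ℕ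
  | 0 => 0
  | i + 1 => if a.getD (i + 2) 0 = a.getD i 0 then rnormIdx a i else i + 1

/-- One move of the raising algorithm from `(a, i)` with `i ∈ M(a)`: after normalizing the
index, either halt (`none`, at an initial element) or perform one step. -/
def raiseMove (a : List ℕ) (i : ℕ) : Option (List ℕ × ℕ) :=
  let j := rnormIdx a i
  if a.getD (j + 1) 0 = 0 then none
  else some ((a.set j (a.getD j 0 + 1)).set (j + 1) (a.getD (j + 1) 0 - 1), j)

/-- The list of elements produced by iterating the raising algorithm (including the start). -/
def raiseList : ℕ → List ℕ → ℕ → List (List ℕ)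
  | 0, a, _ => [a]
  | fuel + 1, a, i =>
    match raiseMove a i with
    | none => [a]
    | some (a', j) => a :: raiseList fuel a' j

/-- Normalization phase of the lowering algorithm: starting at index `i ∈ M(a)`, repeatedly
replace `i` by `i + 1` as long as `i ≤ n - 2` and `a_i = a_{i+2}` (fuel-driven). -/
def lnormIdx (a : List ℕ) : ℕ → ℕ → ℕ
  | 0, i => i
  | fuel + 1, i =>
    if i + 2 < a.length ∧ a.getD i 0 = a.getD (i + 2) 0 then lnormIdx a fuel (i + 1) else i

/-- One move of the lowering algorithm from `(a, i)` with `i ∈ M(a)`: after normalizing the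
index, either halt (`none`, at a terminal element) or perform one step. -/
def lowerMove (a : List ℕ) (i : ℕ) : Option (List ℕ × ℕ) :=
  let j := lnormIdx a a.length i
  if a.getD j 0 = 0 then none
  else some ((a.set j (a.getD j 0 - 1)).set (j + 1) (a.getD (j + 1) 0 + 1), j)

/-- The list of elements produced by iterating the lowering algorithm (including the start). -/
def lowerList : ℕ → List ℕ → ℕ → List (List ℕ)
  | 0, a, _ => [a]
  | fuel + 1, a, i =>
    match lowerMove a i with
    | none => [a]
    | some (a', j) => a :: lowerList fuel a' j

/-- The colors of the successive covering relations produced by the lowering algorithm: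
a lowering step at index `j` replaces `(a_j, a_{j+1})` by `(a_j - 1, a_{j+1} + 1)` and has
color `j + 1`. -/
def lowerColors : ℕ → List ℕ → ℕ → List ℕ
  | 0, _, _ => []
  | fuel + 1, a, i =>
    match lowerMove a i with
    | none => []
    | some (a', j) => (j + 1) :: lowerColors fuel a' j

/-- The transversal chain `T_i(a)`: the elements obtained from `a` by the raising algorithm
together with those obtained by the lowering algorithm, both started at index `i ∈ M(a)`.
(The fuels `rk(a)` and `a.length * a.sum` are always sufficient, since each raising move
decreases the rank by 1 and each lowering move increases it by 1, within `[0, n·m]`.) -/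
def Tset (a : List ℕ) (i : ℕ) : Set (List ℕ) :=
  {x | x ∈ raiseList (rkL a) a i ∨ x ∈ lowerList (a.length * a.sum) a i}

end OHara

namespace OHara

/-- `Red s e a b`: `b` arises from `a` by deleting `e` times an adjacent pair of sum `s`. -/
inductive Red (s : ℕ) : ℕ → List ℕ → List ℕ → Prop
  | refl (a : List ℕ) : Red s 0 a a
  | step (e : ℕ) (u : List ℕ) (x y : ℕ) (v b : List ℕ) (hxy : x + y = s)
      (hr : Red s e (u ++ v) b) : Red s (e + 1) (u ++ x :: y :: v) b

theorem Red.cons {s e : ℕ} {a b : List ℕ} (z : ℕ) (h : Red s e a b) :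
    Red s e (z :: a) (z :: b) := by
  induction h with
  | refl a => exact Red.refl _
  | step e u x y v b hxy hr ih => exact Red.step e (z :: u) x y v (z :: b) hxy ih

theorem Red.sum_eq {s e : ℕ} {a b : List ℕ} (h : Red s e a b) : a.sum = e * s + b.sum := by
  induction h with
  | refl a => simp
  | step e u x y v b hxy hr ih =>
    simp only [List.sum_append, List.sum_cons] at *
    rw [Nat.add_mul]; omega

theorem Red.length_eq {s e : ℕ} {a b : List ℕ} (h : Red s e a b) :
    a.length = 2 * e + b.length := by
  induction h with
  | refl a => simp
  | step e u x y v b hxy hr ih =>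
    simp only [List.length_append, List.length_cons] at *
    omega

/-- All adjacent sums are at most `s`. -/
def Bd (s : ℕ) : List ℕ → Prop
  | [] => True
  | [_] => True
  | x :: y :: l => x + y ≤ s ∧ Bd s (y :: l)

theorem Bd.tail {s z : ℕ} {l : List ℕ} (h : Bd s (z :: l)) : Bd s l := by
  cases l with
  | nil => trivial
  | cons y l => exact h.2

theorem Bd.del {s x y : ℕ} {v : List ℕ} (hxy : x + y = s) :
    ∀ u : List ℕ, Bd s (u ++ x :: y :: v) → Bd s (u ++ v)
  | [], h => h.tail.tail
  | [z], h => by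
    cases v with
    | nil => trivial
    | cons w v =>
      simp only [List.cons_append, List.nil_append, Bd] at *
      refine ⟨by omega, h.2.2.2⟩
  | z :: w :: u, h => by
    have := Bd.del hxy (w :: u) h.2
    exact ⟨h.1, this⟩

theorem Red.bd {s e : ℕ} {a b : List ℕ} (h : Red s e a b) (ha : Bd s a) : Bd s b := by
  induction h with
  | refl a => exact ha
  | step e u x y v b hxy hr ih => exact ih (Bd.del hxy u ha)

/-- Prefix sums. -/
def P (a : List ℕ) (j : ℕ) : ℕ := (a.take j).sum

@[simp] theorem P_zero (a : List ℕ) : P a 0 = 0 := by simp [P]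
@[simp] theorem P_cons (x : ℕ) (a : List ℕ) (j : ℕ) : P (x :: a) (j + 1) = x + P a j := by
  simp [P]

theorem P_succ (a : List ℕ) (j : ℕ) : P a (j + 1) = P a j + a.getD j 0 := by
  induction a generalizing j with
  | nil => simp [P]
  | cons x a ih =>
    cases j with
    | zero => simp
    | succ j => rw [P_cons, P_cons, ih]; simp; ring

theorem P_le_sum (a : List ℕ) (j : ℕ) : P a j ≤ a.sum := by
  have := List.sum_take_add_sum_drop a j
  unfold P; omega

theorem P_mono (a : List ℕ) (j : ℕ) : P a j ≤ P a (j + 1) := by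
  rw [P_succ]; omega

theorem P_length (a : List ℕ) : P a a.length = a.sum := by simp [P]

theorem P_del {s x y : ℕ} {v : List ℕ} (hxy : x + y = s) :
    ∀ (u : List ℕ) (t : ℕ), Bd s (u ++ x :: y :: v) →
      P (u ++ x :: y :: v) (2 * t + 2) ≤ s + P (u ++ v) (2 * t)
  | [], t, h => by
    simp; omega
  | [z], 0, h => by
    simpa using h.1
  | [z], t + 1, h => by
    show P (z :: x :: y :: v) (2 * t + 1 + 1 + 1 + 1) ≤ s + P (z :: v) (2 * t + 1 + 1)
    simp; omega
  | z :: w :: u, 0, h => by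
    simpa using h.1
  | z :: w :: u, t + 1, h => by
    have := P_del hxy u t h.tail.tail
    show P (z :: w :: (u ++ x :: y :: v)) (2 * t + 2 + 1 + 1) ≤
      s + P (z :: w :: (u ++ v)) (2 * t + 1 + 1)
    simp only [P_cons]; omega

theorem Red.P_le {s e : ℕ} {a b : List ℕ} (h : Red s e a b) (ha : Bd s a) (t : ℕ) :
    P a (2 * t) ≤ min t e * s + P b (2 * (t - e)) := by
  induction h generalizing t with
  | refl a => simp
  | step e u x y v b hxy hr ih =>
    cases t with
    | zero => simp
    | succ t =>
      have h1 := P_del hxy u t ha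
      have h2 := ih (Bd.del hxy u ha) t
      have h3 : min (t + 1) (e + 1) = min t e + 1 := by omega
      have h4 : t + 1 - (e + 1) = t - e := by omega
      rw [h3, h4, Nat.add_mul]
      have h5 : 2 * (t + 1) = 2 * t + 2 := by ring
      rw [h5]; omega

theorem bd_of_getD {s : ℕ} : ∀ {a : List ℕ},
    (∀ i, i + 1 < a.length → a.getD i 0 + a.getD (i + 1) 0 ≤ s) → Bd s a
  | [], _ => trivial
  | [_], _ => trivial
  | x :: y :: l, h => by
    refine ⟨by simpa using h 0 (by simp), bd_of_getD fun i hi => ?_⟩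
    have := h (i + 1) (by simpa using hi)
    simpa using this

theorem Bd.getD {s : ℕ} : ∀ {a : List ℕ}, Bd s a →
    ∀ i, i + 1 < a.length → a.getD i 0 + a.getD (i + 1) 0 ≤ s
  | [], _, i, hi => by simp at hi
  | [_], _, i, hi => by simp at hi
  | x :: y :: l, h, 0, _ => by simpa using h.1
  | x :: y :: l, h, i + 1, hi => by
    have := Bd.getD h.2 i (by simpa using hi)
    simpa using this

theorem bd_spr (a : List ℕ) : Bd (sprL a) a := by
  apply bd_of_getD
  intro i hi
  exact Finset.le_sup (f := fun i => a.getD i 0 + a.getD (i + 1) 0)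
    (Finset.mem_range.2 (by omega : i < a.length - 1))

theorem Bd.spr_le {s : ℕ} {a : List ℕ} (h : Bd s a) : sprL a ≤ s := by
  apply Finset.sup_le
  intro i hi
  rw [Finset.mem_range] at hi
  exact h.getD i (by omega)

theorem mem_Mset {a : List ℕ} {i : ℕ} :
    i ∈ Mset a ↔ i + 1 < a.length ∧ a.getD i 0 + a.getD (i + 1) 0 = sprL a := by
  simp [Mset]; omega

theorem Mset_nonempty {a : List ℕ} (h : 2 ≤ a.length) : (Mset a).Nonempty := by
  obtain ⟨i, hi, he⟩ := Finset.exists_mem_eq_sup (Finset.range (a.length - 1))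
    ⟨0, by simp; omega⟩ (fun i => a.getD i 0 + a.getD (i + 1) 0)
  exact ⟨i, Finset.mem_filter.2 ⟨hi, he.symm⟩⟩

theorem drop_cons (a : List ℕ) (c : ℕ) (h : c < a.length) :
    a.drop c = a.getD c 0 :: a.drop (c + 1) := by
  rw [List.drop_eq_getElem_cons h, List.getD_eq_getElem _ _ h]

theorem red_pairs {a : List ℕ} {s e : ℕ} {b : List ℕ} (m : ℕ) : ∀ (c : ℕ),
    (∀ i < m, c + 2 * i + 1 < a.length ∧ a.getD (c + 2 * i) 0 + a.getD (c + 2 * i + 1) 0 = s) →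
    Red s e (a.drop (c + 2 * m)) b → Red s (e + m) (a.drop c) b := by
  induction m with
  | zero => intro c _ h; simpa using h
  | succ m ih =>
    intro c hc h
    have h0 := hc 0 (by omega)
    simp only [Nat.mul_zero, Nat.add_zero] at h0
    rw [drop_cons a c (by omega), drop_cons a (c + 1) (by omega)]
    refine Red.step (e + m) [] _ _ _ _ h0.2 ?_
    refine ih (c + 2) (fun i hi => ?_) ?_
    · have := hc (i + 1) (by omega)
      rw [show c + 2 * (i + 1) = c + 2 + 2 * i by ring] at this
      exact this
    · rw [show c + 2 * (m + 1) = c + 2 + 2 * m by ring] at h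
      exact h

/-- the component of a left end -/
theorem comp_spec {S : Finset ℕ} {c : ℕ} (hc : c ∈ S) (hl : c = 0 ∨ c - 1 ∉ S) :
    ∃ d, (∀ i, c ≤ i → i ≤ c + d → i ∈ S) ∧ c + d + 1 ∉ S ∧ (compF S c).card = d + 1 := by
  have hex : ∃ d, c + d + 1 ∉ S := by
    refine ⟨S.sup id, fun h => ?_⟩
    have : c + S.sup id + 1 ≤ S.sup id := Finset.le_sup (f := id) h
    omega
  classical
  refine ⟨Nat.find hex, ?_, Nat.find_spec hex, ?_⟩
  · intro i h1 h2
    by_contra hi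
    rcases Nat.eq_or_lt_of_le h1 with h | h
    · exact hi (h ▸ hc)
    · refine Nat.find_min hex (m := i - c - 1) (by omega) ?_
      rwa [show c + (i - c - 1) + 1 = i by omega]
  · have h1 : ∀ i, c ≤ i → i ≤ c + Nat.find hex → i ∈ S := by
      intro i h1 h2
      by_contra hi
      rcases Nat.eq_or_lt_of_le h1 with h | h
      · exact hi (h ▸ hc)
      · refine Nat.find_min hex (m := i - c - 1) (by omega) ?_
        rwa [show c + (i - c - 1) + 1 = i by omega]
    have h2 := Nat.find_spec hex
    generalize Nat.find hex = d at *
    have : compF S c = Finset.Icc c (c + d) := by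
      ext j
      simp only [compF, Finset.mem_filter, Finset.mem_Icc]
      constructor
      · rintro ⟨hj, hs⟩
        constructor
        · by_contra hlt
          rcases hl with h | h
          · omega
          · exact h (hs (by simp; omega))
        · by_contra hlt
          exact h2 (hs (by simp; omega))
      · rintro ⟨h3, h4⟩
        refine ⟨h1 j h3 h4, fun i hi => ?_⟩
        simp only [Finset.mem_Icc] at hi
        exact h1 i (by omega) (by omega)
    rw [this]; simp; omega

theorem surv_iff (a : List ℕ) (j : ℕ) : survivesB a j = true ↔
    (j ∉ ActF a ∨ (j ∈ leftEnds (Mset a) ∧ Even (compF (Mset a) j).card)) := by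
  simp [survivesB]

theorem mem_Act {a : List ℕ} {j : ℕ} :
    j ∈ ActF a ↔ j ∈ Mset a ∨ (1 ≤ j ∧ j - 1 ∈ Mset a) := by
  simp only [ActF, Finset.mem_union, Finset.mem_image]
  constructor
  · rintro (h | ⟨i, h, rfl⟩)
    · exact Or.inl h
    · right; simpa using h
  · rintro (h | ⟨h, h'⟩)
    · exact Or.inl h
    · exact Or.inr ⟨j - 1, h', by omega⟩

theorem red_suffix (a : List ℕ) (r : ℕ) : ∀ c, a.length - c = r → c ≤ a.length →
    (c = 0 ∨ c - 1 ∉ Mset a) →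
    Red (sprL a) (∑ i ∈ (leftEnds (Mset a)).filter (c ≤ ·), ((compF (Mset a) i).card + 1) / 2)
      (a.drop c)
      (((List.range' c (a.length - c)).filter (fun j => survivesB a j)).map
        (fun j => a.getD j 0)) := by
  induction r using Nat.strong_induction_on with
  | _ r ih =>
  intro c hr hcN hl
  rcases Nat.eq_or_lt_of_le hcN with hc | hc
  · have h1 : (leftEnds (Mset a)).filter (c ≤ ·) = ∅ := by
      apply Finset.filter_eq_empty_iff.2
      intro i hi
      have := (mem_Mset.1 (Finset.mem_filter.1 hi).1).1
      omega
    rw [h1, hc]; simp; exact Red.refl _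
  by_cases hcS : c ∈ Mset a
  · obtain ⟨d, hd1, hd2, hd3⟩ := comp_spec hcS hl
    have hcl : c ∈ leftEnds (Mset a) := Finset.mem_filter.2 ⟨hcS, hl⟩
    have hlast := (mem_Mset.1 (hd1 (c + d) (by omega) (by omega))).1
    have IH := ih (a.length - (c + d + 2)) (by omega) (c + d + 2) rfl (by omega)
      (Or.inr (by simpa using hd2))
    have hE : (leftEnds (Mset a)).filter (c ≤ ·) =
        insert c ((leftEnds (Mset a)).filter (c + d + 2 ≤ ·)) := by
      ext i
      simp only [Finset.mem_filter, Finset.mem_insert]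
      constructor
      · rintro ⟨h1, h2⟩
        by_cases hi : i = c
        · exact Or.inl hi
        · right; refine ⟨h1, ?_⟩
          by_contra hlt
          have h3 := Finset.mem_filter.1 h1
          by_cases h4 : i = c + d + 1
          · exact hd2 (h4 ▸ h3.1)
          · rcases h3.2 with h5 | h5
            · omega
            · exact h5 (hd1 _ (by omega) (by omega))
      · rintro (rfl | ⟨h1, h2⟩)
        · exact ⟨hcl, le_refl _⟩
        · exact ⟨h1, by omega⟩
    rw [hE, Finset.sum_insert (by simp; intro _; omega), hd3]
    have hsplit : List.range' c (a.length - c) =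
        c :: (List.range' (c + 1) (d + 1) ++ List.range' (c + d + 2) (a.length - (c + d + 2))) := by
      rw [show c + d + 2 = c + 1 + (d + 1) by ring, List.range'_append_1,
        show a.length - c = (d + 1 + (a.length - (c + 1 + (d + 1)))) + 1 by omega,
        List.range'_succ]
    have hmid : (List.range' (c + 1) (d + 1)).filter (fun j => survivesB a j) = [] := by
      rw [List.filter_eq_nil_iff]
      intro j hj
      rw [List.mem_range'_1] at hj
      rw [surv_iff, mem_Act]
      rintro (h | ⟨h, -⟩)
      · exact h (Or.inr ⟨by omega, hd1 _ (by omega) (by omega)⟩)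
      · rcases (Finset.mem_filter.1 h).2 with h5 | h5
        · omega
        · exact h5 (hd1 _ (by omega) (by omega))
    rw [hsplit, List.filter_cons, List.filter_append, hmid, List.nil_append]
    have hsurv : survivesB a c = true ↔ Even (d + 1) := by
      rw [surv_iff, mem_Act, hd3]; simp [hcS, hcl]
    by_cases hev : Even (d + 1)
    · rw [if_pos (hsurv.2 hev), List.map_cons, drop_cons a c hc]
      apply Red.cons
      obtain ⟨m, hm⟩ := hev
      rw [add_comm, show (d + 1 + 1) / 2 = m by omega]
      apply red_pairs
      · intro i hi
        exact mem_Mset.1 (hd1 _ (by omega) (by omega))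
      · rw [show c + 1 + 2 * m = c + d + 2 by omega]; exact IH
    · rw [if_neg (fun h => hev (hsurv.1 h))]
      rw [Nat.not_even_iff_odd] at hev
      obtain ⟨m, hm⟩ := hev
      rw [add_comm, show (d + 1 + 1) / 2 = m + 1 by omega]
      apply red_pairs
      · intro i hi
        exact mem_Mset.1 (hd1 _ (by omega) (by omega))
      · rw [show c + 2 * (m + 1) = c + d + 2 by omega]; exact IH
  · have hE : (leftEnds (Mset a)).filter (c ≤ ·) = (leftEnds (Mset a)).filter (c + 1 ≤ ·) := by
      apply Finset.filter_congr
      intro i hi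
      have : i ≠ c := fun h => hcS (h ▸ (Finset.mem_filter.1 hi).1)
      omega
    have hs : survivesB a c = true := by
      rw [surv_iff, mem_Act]
      left
      rintro (h | ⟨h, h'⟩)
      · exact hcS h
      · rcases hl with h0 | h0
        · omega
        · exact h0 h'
    rw [hE, drop_cons a c hc, show a.length - c = (a.length - (c + 1)) + 1 by omega,
      List.range'_succ, List.filter_cons, if_pos hs, List.map_cons]
    apply Red.cons
    exact ih (a.length - (c + 1)) (by omega) (c + 1) rfl (by omega) (Or.inr (by simpa using hcS))

theorem red_omega (a : List ℕ) : Red (sprL a) (ecdL a) a (omegaL a) := by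
  have := red_suffix a a.length 0 (by simp) (by simp) (Or.inl rfl)
  simpa [ecdL, omegaL, List.range_eq_range'] using this

theorem ecd_pos {a : List ℕ} (h : 2 ≤ a.length) : 1 ≤ ecdL a := by
  have hne := Mset_nonempty h
  have hm := Finset.min'_mem _ hne
  have hl : (Mset a).min' hne ∈ leftEnds (Mset a) := by
    refine Finset.mem_filter.2 ⟨hm, ?_⟩
    by_contra hcon
    push Not at hcon
    have := Finset.min'_le _ _ hcon.2
    omega
  obtain ⟨d, -, -, hd⟩ := comp_spec (Finset.mem_filter.1 hl).1 (Finset.mem_filter.1 hl).2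
  have := Finset.single_le_sum (f := fun i => ((compF (Mset a) i).card + 1) / 2)
    (fun i _ => Nat.zero_le _) hl
  simp only [hd] at this
  unfold ecdL
  omega

end OHara

namespace OHara

theorem mOf_nil : mOf [] = 0 := by simp [mOf]

theorem sum_getD (l : List ℕ) : ∑ j ∈ Finset.range l.length, l.getD j 0 = l.sum := by
  induction l with
  | nil => simp
  | cons x l ih =>
    rw [List.length_cons, Finset.sum_range_succ', List.sum_cons, ← ih]
    simp; ring

theorem mOf_cons (d : ℕ) (ds : List ℕ) : mOf (d :: ds) = d + mOf ds + ds.sum := by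
  unfold mOf
  rw [List.length_cons, Finset.sum_range_succ', ← sum_getD ds]
  simp only [List.getD_cons_succ, List.getD_cons_zero]
  have : ∀ j ∈ Finset.range ds.length, (j + 1 + 1) * ds.getD j 0 =
      (j + 1) * ds.getD j 0 + ds.getD j 0 := fun j _ => by ring
  rw [Finset.sum_congr rfl this, Finset.sum_add_distrib]
  ring

theorem mOf_rep (j : ℕ) (ds : List ℕ) :
    mOf (List.replicate j 0 ++ ds) = mOf ds + j * ds.sum := by
  induction j with
  | zero => simp
  | succ j ih =>
    rw [List.replicate_succ, List.cons_append, mOf_cons, ih]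
    simp; ring

def G (ds : List ℕ) (t : ℕ) : ℕ := ∑ i ∈ Finset.range t, (ds.drop i).sum

@[simp] theorem G_zero (ds : List ℕ) : G ds 0 = 0 := by simp [G]

theorem G_succ (ds : List ℕ) (t : ℕ) : G ds (t + 1) = G ds t + (ds.drop t).sum := by
  simp [G, Finset.sum_range_succ]

theorem G_cons (d : ℕ) (ds : List ℕ) (t : ℕ) : G (d :: ds) (t + 1) = d + ds.sum + G ds t := by
  unfold G
  rw [Finset.sum_range_succ']
  simp; ring

theorem G_rep (j d : ℕ) (rest : List ℕ) (t : ℕ) :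
    G (List.replicate j 0 ++ d :: rest) t =
      min t (j + 1) * (d + rest.sum) + G rest (t - (j + 1)) := by
  induction j generalizing t with
  | zero =>
    cases t with
    | zero => simp
    | succ t => simp [G_cons]
  | succ j ih =>
    cases t with
    | zero => simp
    | succ t =>
      rw [List.replicate_succ, List.cons_append, G_cons, ih]
      have h3 : min (t + 1) (j + 1 + 1) = min t (j + 1) + 1 := by omega
      have h4 : t + 1 - (j + 1 + 1) = t - (j + 1) := by omega
      rw [h3, h4]; simp; ring

theorem G_length (ds : List ℕ) : G ds ds.length = mOf ds := by
  induction ds with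
  | nil => simp [mOf_nil]
  | cons d ds ih => rw [List.length_cons, G_cons, ih, mOf_cons]; ring

theorem sigma_step (f : ℕ) (a : List ℕ) (h : 3 ≤ a.length) :
    sigmaAux (f + 1) a = List.replicate (ecdL a - 1) 0 ++
      (sprL a - sprL (omegaL a)) :: sigmaAux f (omegaL a) := by
  cases a with
  | nil => simp at h
  | cons x a =>
    rw [sigmaAux, if_neg (by omega)]
    · simp
    · simp

theorem spr_omega_le (a : List ℕ) : sprL (omegaL a) ≤ sprL a :=
  ((red_omega a).bd (bd_spr a)).spr_le

theorem sigma_one (f x : ℕ) : sigmaAux f [x] = [x] := by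
  cases f <;> simp [sigmaAux]

theorem sigma_two (f x y : ℕ) : sigmaAux f [x, y] = [x + y] := by
  cases f <;> simp [sigmaAux]

theorem sigma_nil (f : ℕ) : sigmaAux f [] = [] := by
  cases f <;> simp [sigmaAux]

theorem sig_spec : ∀ (f : ℕ) (a : List ℕ), a.length ≤ f → ∃ r K,
    (sigmaAux f a).sum = sprL a + r ∧ mOf (sigmaAux f a) = a.sum + r * K ∧
      (2 ≤ a.length → 1 ≤ K)
  | f, [], _ => ⟨0, 1, by simp [sigma_nil, sprL], by simp [sigma_nil, mOf], by simp⟩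
  | f, [x], _ => ⟨x, 0, by simp [sigma_one, sprL], by simp [sigma_one, mOf], by simp⟩
  | f, [x, y], _ => ⟨0, 1, by simp [sigma_two, sprL], by simp [sigma_two, mOf], by simp⟩
  | 0, x :: y :: z :: l, h => by simp at h
  | f + 1, x :: y :: z :: l, h => by
    have h3 : 3 ≤ (x :: y :: z :: l).length := by simp
    generalize x :: y :: z :: l = a at *
    have he := ecd_pos (a := a) (by omega)
    have hr := red_omega a
    have hlen := hr.length_eq
    have hsum := hr.sum_eq
    have hle := spr_omega_le a
    obtain ⟨r, K, h1, h2, -⟩ := sig_spec f (omegaL a) (by omega)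
    rw [sigma_step f a h3]
    generalize ecdL a = e at *
    obtain ⟨e, rfl⟩ : ∃ e', e = e' + 1 := ⟨e - 1, by omega⟩
    obtain ⟨q, hq⟩ := Nat.exists_eq_add_of_le hle
    refine ⟨r, K + e + 1, ?_, ?_, fun _ => by omega⟩
    · simp [h1]; omega
    · rw [mOf_rep, mOf_cons, List.sum_cons, h1, h2, hsum, hq]
      simp; ring

theorem dom : ∀ (f : ℕ) (a : List ℕ), a.length ≤ f → (sigmaAux f a).sum = sprL a →
    ∀ t, P a (2 * t) ≤ G (sigmaAux f a) t
  | f, [], _, _, t => by simp [P]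
  | f, [x], _, _, 0 => by simp
  | f, [x], _, _, t + 1 => by
    refine (P_le_sum _ _).trans ?_
    rw [sigma_one, G_cons]; simp
  | f, [x, y], _, _, 0 => by simp
  | f, [x, y], _, _, t + 1 => by
    refine (P_le_sum _ _).trans ?_
    rw [sigma_two, G_cons]; simp
  | 0, x :: y :: z :: l, h, _, _ => by simp at h
  | f + 1, x :: y :: z :: l, h, hs, t => by
    have h3 : 3 ≤ (x :: y :: z :: l).length := by simp
    generalize x :: y :: z :: l = a at *
    have he := ecd_pos (a := a) (by omega)
    have hr := red_omega a
    have hlen := hr.length_eq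
    have hle := spr_omega_le a
    rw [sigma_step f a h3] at hs ⊢
    have hs' : sprL a - sprL (omegaL a) + (sigmaAux f (omegaL a)).sum = sprL a := by
      simpa using hs
    have IH := dom f (omegaL a) (by omega) (by omega)
    have hP := hr.P_le (bd_spr a) t
    rw [G_rep, hs', Nat.sub_add_cancel he]
    exact hP.trans (Nat.add_le_add_left (IH _) _)

theorem last_zero : ∀ (f : ℕ) (a : List ℕ), a.length ≤ f → (sigmaAux f a).sum = sprL a →
    a.length % 2 = 1 → ∃ l, sigmaAux f a = l ++ [0]
  | f, [], _, _, h => by simp at h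
  | f, [x], _, hs, _ => by
    rw [sigma_one] at hs ⊢
    refine ⟨[], ?_⟩
    simp [sprL] at hs
    simp [hs]
  | f, [x, y], _, _, h => by simp at h
  | 0, x :: y :: z :: l, h, _, _ => by simp at h
  | f + 1, x :: y :: z :: l, h, hs, hp => by
    have h3 : 3 ≤ (x :: y :: z :: l).length := by simp
    generalize x :: y :: z :: l = a at *
    have he := ecd_pos (a := a) (by omega)
    have hr := red_omega a
    have hlen := hr.length_eq
    have hle := spr_omega_le a
    rw [sigma_step f a h3] at hs ⊢
    have hs' : sprL a - sprL (omegaL a) + (sigmaAux f (omegaL a)).sum = sprL a := by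
      simpa using hs
    obtain ⟨l, hl⟩ := last_zero f (omegaL a) (by omega) (by omega) (by omega)
    rw [hl]
    exact ⟨List.replicate (ecdL a - 1) 0 ++ (sprL a - sprL (omegaL a)) :: l, by simp⟩

theorem abel (f : ℕ → ℕ) (g : ℕ → ℕ) (h0 : g 0 = 0) (hg : ∀ j, g (j + 1) = g j + f j) (N : ℕ) :
    ∑ i ∈ Finset.range N, i * f i + ∑ j ∈ Finset.range (N + 1), g j = N * g N := by
  induction N with
  | zero => simp [h0]
  | succ N ih =>
    rw [Finset.sum_range_succ, Finset.sum_range_succ _ (N + 1), hg N]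
    nlinarith

theorem rk_abel (a : List ℕ) :
    rkL a + ∑ j ∈ Finset.range (a.length + 1), P a j = a.length * a.sum := by
  rw [← P_length]
  exact abel (fun i => a.getD i 0) (P a) (by simp) (P_succ a) a.length

/-- The list `h`. -/
def hL (n : ℕ) (ds : List ℕ) : List ℕ :=
  (List.range (n + 1)).map (fun i => if i % 2 = 0 then (ds.drop (i / 2)).sum else 0)

@[simp] theorem hL_length (n : ℕ) (ds : List ℕ) : (hL n ds).length = n + 1 := by simp [hL]

theorem hL_getD {n : ℕ} {ds : List ℕ} (hl : ds.length = n / 2 + 1) (i : ℕ) :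
    (hL n ds).getD i 0 = if i % 2 = 0 then (ds.drop (i / 2)).sum else 0 := by
  by_cases hi : i < n + 1
  · rw [List.getD_eq_getElem _ _ (by simpa using hi)]
    simp [hL]
  · rw [List.getD_eq_default _ _ (by simp; omega)]
    split_ifs with h
    · rw [List.drop_eq_nil_of_le (by omega)]; rfl
    · rfl

theorem hL_P {n : ℕ} {ds : List ℕ} (hl : ds.length = n / 2 + 1) (j : ℕ) :
    P (hL n ds) j = G ds ((j + 1) / 2) := by
  induction j with
  | zero => simp
  | succ j ih =>
    rw [P_succ, ih, hL_getD hl]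
    split_ifs with h
    · rw [show (j + 1 + 1) / 2 = (j + 1) / 2 + 1 by omega, G_succ,
        show (j + 1) / 2 = j / 2 by omega]
    · rw [show (j + 1 + 1) / 2 = (j + 1) / 2 by omega]; rfl

theorem hL_sum {n : ℕ} {ds : List ℕ} (hl : ds.length = n / 2 + 1) :
    (hL n ds).sum = mOf ds := by
  rw [← P_length, hL_P hl, hL_length, show (n + 1 + 1) / 2 = ds.length by omega, G_length]

theorem hL_pair {n : ℕ} {ds : List ℕ} (hl : ds.length = n / 2 + 1) (i : ℕ) :
    (hL n ds).getD i 0 + (hL n ds).getD (i + 1) 0 = (ds.drop ((i + 1) / 2)).sum := by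
  rw [hL_getD hl, hL_getD hl]
  rcases Nat.mod_two_eq_zero_or_one i with h | h
  · rw [if_pos h, if_neg (by omega), show (i + 1) / 2 = i / 2 by omega]; rfl
  · rw [if_neg (by omega), if_pos (by omega)]; simp

theorem drop_sum_le (ds : List ℕ) (i : ℕ) : (ds.drop i).sum ≤ ds.sum := by
  have := List.sum_take_add_sum_drop ds i
  omega

theorem hL_spr {n : ℕ} {ds : List ℕ} (hl : ds.length = n / 2 + 1) (hn : 1 ≤ n) :
    sprL (hL n ds) = ds.sum := by
  apply le_antisymm
  · apply Finset.sup_le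
    intro i _
    rw [hL_pair hl]; exact drop_sum_le _ _
  · have := Finset.le_sup (f := fun i => (hL n ds).getD i 0 + (hL n ds).getD (i + 1) 0)
      (Finset.mem_range.2 (by simp; omega : 0 < (hL n ds).length - 1))
    rw [hL_pair hl] at this
    exact this

theorem hL_drop {n : ℕ} {ds : List ℕ} (q : ℕ) (hq : 2 * q ≤ n) :
    (hL n ds).drop (2 * q) = hL (n - 2 * q) (ds.drop q) := by
  apply List.ext_getElem
  · simp; omega
  · intro i h1 h2
    simp [hL, Nat.add_div_of_dvd_right]

theorem initial_seg {a : List ℕ} {q : ℕ} (hM : Mset a = Finset.range (q + 1)) :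
    ecdL a = (q + 2) / 2 ∧ omegaL a =
      if Even (q + 1) then a.getD 0 0 :: a.drop (q + 2) else a.drop (q + 2) := by
  have hl : leftEnds (Mset a) = {0} := by
    ext i
    simp only [leftEnds, hM, Finset.mem_filter, Finset.mem_range, Finset.mem_singleton]
    omega
  have hc : compF (Mset a) 0 = Finset.range (q + 1) := by
    ext i
    simp only [compF, hM, Finset.mem_filter, Finset.mem_range]
    constructor
    · exact fun h => h.1
    · refine fun h => ⟨h, fun j hj => ?_⟩
      simp at hj ⊢; omega
  have hlen : q + 1 < a.length := (mem_Mset.1 (hM ▸ Finset.mem_range.2 (Nat.lt_succ_self q))).1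
  have hs0 : survivesB a 0 = true ↔ Even (q + 1) := by
    rw [surv_iff, mem_Act, hl, hc, hM]; simp
  have hs1 : ∀ j, j ≠ 0 → (survivesB a j = true ↔ q + 2 ≤ j) := by
    intro j hj
    rw [surv_iff, mem_Act, hl, hM]; simp [hj]; omega
  constructor
  · rw [ecdL, hl, Finset.sum_singleton, hc, Finset.card_range]
  · have hsplit : List.range a.length =
        0 :: (List.range' 1 (q + 1) ++ List.range' (q + 2) (a.length - (q + 2))) := by
      rw [show q + 2 = 1 + (q + 1) by ring, List.range'_append_1, List.range_eq_range']
      conv_lhs => rw [show a.length = (q + 1 + (a.length - (1 + (q + 1)))) + 1 by omega]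
      rw [List.range'_succ]
    have h1 : (List.range' 1 (q + 1)).filter (fun j => survivesB a j) = [] := by
      rw [List.filter_eq_nil_iff]
      intro j hj
      rw [List.mem_range'_1] at hj
      rw [hs1 j (by omega)]; omega
    have h2 : (List.range' (q + 2) (a.length - (q + 2))).filter (fun j => survivesB a j) =
        List.range' (q + 2) (a.length - (q + 2)) := by
      rw [List.filter_eq_self]
      intro j hj
      rw [List.mem_range'_1] at hj
      rw [hs1 j (by omega)]; omega
    have h3 : (List.range' (q + 2) (a.length - (q + 2))).map (fun j => a.getD j 0) =
        a.drop (q + 2) := by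
      apply List.ext_getElem
      · simp
      · intro i h1 h2
        simp at h1 ⊢
        rw [List.getElem?_eq_getElem (by omega)]; simp
    rw [omegaL, hsplit, List.filter_cons, List.filter_append, h1, h2, List.nil_append]
    by_cases hev : Even (q + 1)
    · rw [if_pos (hs0.2 hev), if_pos hev, List.map_cons, h3]
    · rw [if_neg (fun h => hev (hs0.1 h)), if_neg hev, h3]

theorem lead (ds : List ℕ) (h : ds ≠ []) : ∃ j d rest, ds = List.replicate j 0 ++ d :: rest ∧
    (0 < d ∨ (d = 0 ∧ rest = [])) := by
  induction ds with
  | nil => exact absurd rfl h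
  | cons x ds ih =>
    rcases Nat.eq_zero_or_pos x with hx | hx
    · by_cases hd : ds = []
      · exact ⟨0, x, ds, rfl, Or.inr ⟨hx, hd⟩⟩
      · obtain ⟨j, d, rest, h1, h2⟩ := ih hd
        exact ⟨j + 1, d, rest, by rw [h1, hx]; rfl, h2⟩
    · exact ⟨0, x, ds, rfl, Or.inl hx⟩

theorem rep_drop_le (j d : ℕ) (rest : List ℕ) (i : ℕ) (hi : i ≤ j) :
    ((List.replicate j 0 ++ d :: rest).drop i).sum = d + rest.sum := by
  rw [List.drop_append_of_le_length (by simpa using hi)]; simp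

theorem rep_drop_gt (j d : ℕ) (rest : List ℕ) (i : ℕ) :
    ((List.replicate j 0 ++ d :: rest).drop (j + 1 + i)) = rest.drop i := by
  rw [List.drop_append, List.drop_eq_nil_of_le (by simp; omega), List.nil_append,
    List.length_replicate, show j + 1 + i - j = i + 1 by omega, List.drop_succ_cons]

theorem sigma_hL : ∀ (f n : ℕ) (ds : List ℕ), n + 1 ≤ f → ds.length = n / 2 + 1 →
    (n % 2 = 0 → 1 ≤ n → ds.getD (n / 2) 0 = 0) → sigmaAux f (hL n ds) = ds := by
  intro f
  induction f with
  | zero => intro n ds h; omega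
  | succ f ih =>
    intro n ds hf hl h0
    by_cases hn : n ≤ 1
    · obtain ⟨d, rfl⟩ : ∃ d, ds = [d] := List.length_eq_one_iff.1 (by omega)
      interval_cases n
      · simp [hL, sigma_one]
      · simp [hL, sigma_two, List.range_succ]
    rw [sigma_step f _ (by simp; omega), hL_spr hl (by omega)]
    obtain ⟨j, d, rest, rfl, hd⟩ := lead ds (by rintro rfl; simp at hl)
    have hlen : j + 1 + rest.length = n / 2 + 1 := by simp at hl; omega
    have hmem : ∀ i, i ∈ Mset (hL n (List.replicate j 0 ++ d :: rest)) ↔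
        i < n ∧ ((List.replicate j 0 ++ d :: rest).drop ((i + 1) / 2)).sum = d + rest.sum := by
      intro i
      rw [mem_Mset, hL_pair hl, hL_spr hl (by omega)]
      simp
    by_cases hcase : 0 < d ∨ n = 2 * j + 1
    · have hjn : 2 * j + 1 ≤ n := by
        by_contra hcon
        have hne : n = 2 * j := by omega
        have := h0 (by omega) (by omega)
        rw [show n / 2 = j by omega] at this
        simp at this
        omega
      have hM : Mset (hL n (List.replicate j 0 ++ d :: rest)) = Finset.range (2 * j + 1) := by
        ext i
        rw [hmem, Finset.mem_range]
        constructor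
        · rintro ⟨h1, h2⟩
          by_contra hcon
          rcases hcase with hc | hc
          · rw [show (i + 1) / 2 = j + 1 + ((i + 1) / 2 - (j + 1)) by omega, rep_drop_gt] at h2
            have := drop_sum_le rest ((i + 1) / 2 - (j + 1))
            omega
          · omega
        · intro h
          exact ⟨by omega, rep_drop_le _ _ _ _ (by omega)⟩
      obtain ⟨he, hw⟩ := initial_seg hM
      rw [if_neg (by rw [Nat.not_even_iff_odd]; exact ⟨j, rfl⟩)] at hw
      rw [he, show (2 * j + 2) / 2 - 1 = j by omega]
      by_cases hnn : n = 2 * j + 1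
      · have hrest : rest = [] := List.length_eq_zero_iff.1 (by omega)
        have hw' : omegaL (hL n (List.replicate j 0 ++ d :: rest)) = [] := by
          rw [hw]; apply List.drop_eq_nil_of_le; simp; omega
        rw [hw', hrest, sigma_nil]
        simp [sprL]
      · have hw' : omegaL (hL n (List.replicate j 0 ++ d :: rest)) =
            hL (n - 2 * (j + 1)) rest := by
          rw [hw, show 2 * j + 2 = 2 * (j + 1) by ring, hL_drop _ (by omega)]
          have := rep_drop_gt j d rest 0
          simp only [Nat.add_zero, List.drop_zero] at this
          rw [this]
        have hl' : rest.length = (n - 2 * (j + 1)) / 2 + 1 := by omega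
        have h0' : n % 2 = 0 → rest.getD (n / 2 - (j + 1)) 0 = 0 := by
          intro hp
          have := h0 hp (by omega)
          rw [List.getD_append_right _ _ _ _ (by simp; omega)] at this
          rw [List.length_replicate, show n / 2 - j = n / 2 - (j + 1) + 1 by omega,
            List.getD_cons_succ] at this
          exact this
        have hspr : sprL (hL (n - 2 * (j + 1)) rest) = rest.sum := by
          by_cases hz : n - 2 * (j + 1) = 0
          · obtain ⟨x, rfl⟩ : ∃ x, rest = [x] := List.length_eq_one_iff.1 (by omega)
            have := h0' (by omega)
            rw [show n / 2 - (j + 1) = 0 by omega] at this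
            simp at this
            rw [hz, this]; simp [hL, sprL]
          · exact hL_spr hl' (by omega)
        rw [hw', hspr, ih _ rest (by omega) hl' ?_]
        · simp
        · intro hp _
          rw [show (n - 2 * (j + 1)) / 2 = n / 2 - (j + 1) by omega]
          exact h0' (by omega)
    · push Not at hcase
      obtain ⟨rfl, rfl⟩ : d = 0 ∧ rest = [] := by
        rcases hd with h | h
        · omega
        · exact h
      simp only [List.length_nil] at hlen
      have hne : n = 2 * j := by omega
      subst hne
      have hM : Mset (hL (2 * j) (List.replicate j 0 ++ [0])) =
          Finset.range ((2 * j - 1) + 1) := by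
        ext i
        rw [hmem, Finset.mem_range]
        constructor
        · rintro ⟨h1, h2⟩; omega
        · intro h
          exact ⟨by omega, rep_drop_le _ _ _ _ (by omega)⟩
      obtain ⟨he, hw⟩ := initial_seg hM
      rw [if_pos ⟨j, by omega⟩, List.drop_eq_nil_of_le (by simp; omega), hL_getD hl] at hw
      rw [he, hw, show (2 * j - 1 + 2) / 2 - 1 = j - 1 by omega, sigma_one]
      obtain ⟨q, rfl⟩ : ∃ q, j = q + 1 := ⟨j - 1, by omega⟩
      simp [sprL, List.replicate_succ']

theorem ext_of_P {a b : List ℕ} (hl : a.length = b.length)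
    (h : ∀ j, j < a.length + 1 → P a j = P b j) : a = b := by
  apply List.ext_getElem hl
  intro i h1 h2
  have e1 := h i (by omega)
  have e2 := h (i + 1) (by omega)
  rw [P_succ, P_succ, List.getD_eq_getElem _ _ h1, List.getD_eq_getElem _ _ h2] at e2
  omega

theorem main_aux (n : ℕ) (ds : List ℕ) (hl : ds.length = n / 2 + 1) (a : List ℕ)
    (ha : a ∈ Qset n ds) :
    (n % 2 = 0 → 1 ≤ n → ds.getD (n / 2) 0 = 0) ∧ ∀ t, P a (2 * t) ≤ G ds t := by
  obtain ⟨h1, h2, h3⟩ := ha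
  unfold sigmaL at h3
  by_cases hn : n = 0
  · refine ⟨fun _ _ => by omega, fun t => ?_⟩
    obtain ⟨d, rfl⟩ : ∃ d, ds = [d] := List.length_eq_one_iff.1 (by omega)
    cases t with
    | zero => simp
    | succ t =>
      refine (P_le_sum _ _).trans ?_
      rw [h2, G_cons, mOf_cons, mOf_nil]; simp
  obtain ⟨r, K, e1, e2, e3⟩ := sig_spec a.length a le_rfl
  have hK := e3 (by omega)
  rw [h3] at e1 e2
  have hr : r = 0 := by
    have : r * K = 0 := by omega
    rcases Nat.mul_eq_zero.1 this with h | h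
    · exact h
    · omega
  subst hr
  have hd := dom a.length a le_rfl (by rw [h3]; simpa using e1)
  rw [h3] at hd
  refine ⟨fun hp hp' => ?_, hd⟩
  obtain ⟨l, hl'⟩ := last_zero a.length a le_rfl (by rw [h3]; simpa using e1) (by omega)
  rw [h3] at hl'
  rw [hl'] at hl ⊢
  have : n / 2 = l.length := by simpa using hl.symm
  rw [this]; simp

end OHara


open OHara in
/-- `Q_n(d_0,…,d_k)` has a unique element of minimal rank (equivalently, highest weight),
namely `𝔥 = (h_0,…,h_n)` with `h_i = 0` for odd `i` and `h_{2i} = d_i + d_{i+1} + ⋯ + d_k`. -/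
theorem unique_highest_weight_element (n : ℕ)
    (ds : List ℕ) (hdsl : ds.length = n / 2 + 1)
    (hQ : (Qset n ds).Nonempty)
    (h : List ℕ)
    (hh : h = (List.range (n + 1)).map
      (fun i => if i % 2 = 0 then (ds.drop (i / 2)).sum else 0)) :
    h ∈ Qset n ds ∧ ∀ a ∈ Qset n ds, a ≠ h → rkL h < rkL a := by
  obtain ⟨a₀, ha₀⟩ := hQ
  have hh' : h = hL n ds := hh
  subst hh'
  have hlen : (hL n ds).length = n + 1 := hL_length n ds
  refine ⟨⟨hlen, hL_sum hdsl, ?_⟩, ?_⟩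
  · unfold sigmaL
    exact sigma_hL _ n ds (by omega) hdsl (main_aux n ds hdsl a₀ ha₀).1
  · intro a ha hne
    have hdom := (main_aux n ds hdsl a ha).2
    obtain ⟨h1, h2, h3⟩ := ha
    have hP : ∀ j, P a j ≤ P (hL n ds) j := by
      intro j
      rw [hL_P hdsl]
      rcases Nat.even_or_odd' j with ⟨t, rfl | rfl⟩
      · rw [show (2 * t + 1) / 2 = t by omega]; exact hdom t
      · rw [show (2 * t + 1 + 1) / 2 = t + 1 by omega]
        exact (P_mono a (2 * t + 1)).trans (hdom (t + 1))
    have hex : ∃ j ∈ Finset.range (n + 1 + 1), P a j < P (hL n ds) j := by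
      by_contra hcon
      push Not at hcon
      apply hne
      apply ext_of_P (by rw [h1, hlen])
      intro j hj
      exact le_antisymm (hP j) (hcon j (by rw [Finset.mem_range]; omega))
    have hlt := Finset.sum_lt_sum (fun j (_ : j ∈ Finset.range (n + 1 + 1)) => hP j) hex
    have r1 := rk_abel a
    have r2 := rk_abel (hL n ds)
    rw [h1, h2] at r1
    rw [hlen, hL_sum hdsl] at r2
    omega
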